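/- Suppose given abelian groups M^i, M'^i, N^i, N'^i for every integer i, all of which are zero for i < 0, group homomorphisms φ^i : M^i → N^i and φ'^i : M'^i → N'^i, and for every integer s homomorphisms α^s : M^s → M'^s, β^s : M'^s → M^{s-1}, γ^s : M^{s-1} → M^{s+1} (and similarly ᾱ^s : N^s → N'^s, β̄^s : N'^s → N^{s-1}, γ̄^s : N^{s-1} → N^{s+1}) forming long exact sequences ⋯ → M'^{s-1} → M^{s-2} → M^s → M'^s → M^{s-1} → M^{s+1} → ⋯ (exactness at M^s means im γ^{s-1} = ker α^s, exactness at M'^s means im α^s = ker β^s, exactness at M^{s-1} means im β^s = ker γ^s; similarly for the N-sequence). Assume all maps are compatible: φ' ∘ α = ᾱ ∘ φ, φ ∘ β = β̄ ∘ φ', φ ∘ γ = γ̄ ∘ φ in every degree. Then for every integer w, the family (φ^i) is w-connected if and only if the family (φ'^i) is w-connected. -/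

import Mathlib

/-!
Apply the four lemma at each term of the ladder. Injectivity of `φ' s` involves `φ i` only for
`i ≤ s`, and surjectivity of `φ' s` only for `i ≤ s + 1`, with mere injectivity required at `s + 1`;
so connectedness passes from `φ` to `φ'`. Conversely, injectivity of `φ s` involves `φ' s`,
`φ' (s - 1)` and `φ i` for `i < s`, while surjectivity of `φ s` involves `φ' s`, surjectivity of
`φ i` for `i < s`, and injectivity of `φ i` for `i ≤ s`. So if `φ` is `v`-connected and `φ'` is
`(v + 1)`-connected, then `φ` is `(v + 1)`-connected, and one inducts upwards from the negative
degrees, where all groups vanish.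
-/

open Function

/-- A family of homomorphisms `f i` is `w`-connected if it is bijective in all degrees below `w` and
injective in degree `w`. -/
def IsConnectedUpTo {A B : ℤ → Type*} [∀ i, AddZeroClass (A i)] [∀ i, AddZeroClass (B i)]
    (f : ∀ i, A i →+ B i) (w : ℤ) : Prop :=
  (∀ i < w, Bijective (f i)) ∧ Injective (f w)

namespace IsConnectedUpTo

variable {A B : ℤ → Type*} [∀ i, AddZeroClass (A i)] [∀ i, AddZeroClass (B i)]
  {f : ∀ i, A i →+ B i} {v w i : ℤ}

theorem injective (hf : IsConnectedUpTo f w) (hi : i ≤ w) : Injective (f i) := by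
  rcases hi.lt_or_eq with hlt | rfl
  exacts [(hf.1 i hlt).1, hf.2]

theorem surjective (hf : IsConnectedUpTo f w) (hi : i < w) : Surjective (f i) :=
  (hf.1 i hi).2

theorem mono (hf : IsConnectedUpTo f w) (hvw : v ≤ w) : IsConnectedUpTo f v :=
  ⟨fun i hi => hf.1 i (hi.trans_le hvw), hf.injective hvw⟩

theorem of_subsingleton (hA : ∀ i ≤ w, Subsingleton (A i)) (hB : ∀ i < w, Subsingleton (B i)) :
    IsConnectedUpTo f w := by
  have injective_of_le (i : ℤ) (hi : i ≤ w) : Injective (f i) :=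
    have := hA i hi
    injective_of_subsingleton _
  refine ⟨fun i hi => ⟨injective_of_le i hi.le, ?_⟩, injective_of_le w le_rfl⟩
  have := hB i hi
  exact surjective_to_subsingleton _

theorem succ (hf : IsConnectedUpTo f v) (hsurj : Surjective (f v))
    (hinj : Injective (f (v + 1))) : IsConnectedUpTo f (v + 1) := by
  refine ⟨fun i hi => ?_, hinj⟩
  rcases (Int.lt_add_one_iff.mp hi).lt_or_eq with hlt | rfl
  exacts [hf.1 i hlt, ⟨hf.2, hsurj⟩]

end IsConnectedUpTo

/-- A long exact sequence `⋯ → M (s - c) → M s → M' s → M (s - c + 1) → M (s + 1) → ⋯`, as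
for the cohomology of the base (`M`) and of the total space (`M'`) of a bundle whose Euler class has
degree `c`; a `𝔾ₘ`-bundle has `c = 2`. The maps `residue` and `euler` are indexed by the degree in
which `M` occurs as their target and source, respectively. -/
structure GysinSequence (c : ℤ) (M M' : ℤ → Type*)
    [∀ i, AddGroup (M i)] [∀ i, AddGroup (M' i)] where
  pullback : ∀ s, M s →+ M' s
  residue : ∀ s, M' (s + (c - 1)) →+ M s
  euler : ∀ s, M s →+ M (s + c)
  exact_euler_pullback : ∀ s, Exact (euler s) (pullback (s + c))
  exact_pullback_residue : ∀ s, Exact (pullback (s + (c - 1))) (residue s)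
  exact_residue_euler : ∀ s, Exact (residue s) (euler s)

namespace GysinSequence

variable {c : ℤ} {M M' N N' : ℤ → Type*}
  [∀ i, AddGroup (M i)] [∀ i, AddGroup (M' i)] [∀ i, AddGroup (N i)] [∀ i, AddGroup (N' i)]

section OfEq

variable (S : GysinSequence c M M') {i j k : ℤ}

/-- The map `residue` with source in a degree that is only propositionally equal to
`i + (c - 1)`. -/
def residueOfEq (h : i + (c - 1) = j) : M' j →+ M i :=
  h ▸ S.residue i

/-- The map `euler` with target in a degree that is only propositionally equal to `i + c`. -/
def eulerOfEq (h : i + c = j) : M i →+ M j :=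
  h ▸ S.euler i

theorem exact_eulerOfEq_pullback (h : i + c = j) : Exact (S.eulerOfEq h) (S.pullback j) := by
  subst h
  exact S.exact_euler_pullback i

theorem exact_pullback_residueOfEq (h : i + (c - 1) = j) :
    Exact (S.pullback j) (S.residueOfEq h) := by
  subst h
  exact S.exact_pullback_residue i

theorem exact_residueOfEq_eulerOfEq (h : j + (c - 1) = i) (h' : j + c = k) :
    Exact (S.residueOfEq h) (S.eulerOfEq h') := by
  subst h h'
  exact S.exact_residue_euler j

end OfEq

/-- A morphism of Gysin sequences, as induced by a morphism of bundles: `base` and `total` are the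
pullback maps `φ` and `φ'` on the cohomology of the bases and of the total spaces. -/
structure Hom (S : GysinSequence c M M') (T : GysinSequence c N N') where
  base : ∀ i, M i →+ N i
  total : ∀ i, M' i →+ N' i
  total_pullback : ∀ s x, total s (S.pullback s x) = T.pullback s (base s x)
  base_residue : ∀ s x, base s (S.residue s x) = T.residue s (total (s + (c - 1)) x)
  base_euler : ∀ s x, base (s + c) (S.euler s x) = T.euler s (base s x)

namespace Hom

variable {S : GysinSequence c M M'} {T : GysinSequence c N N'} (F : Hom S T) {i j s v w : ℤ}

theorem pullback_comp_base (s : ℤ) :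
    (T.pullback s).comp (F.base s) = (F.total s).comp (S.pullback s) :=
  AddMonoidHom.ext fun x => (F.total_pullback s x).symm

theorem residueOfEq_comp_total (h : i + (c - 1) = j) :
    (T.residueOfEq h).comp (F.total j) = (F.base i).comp (S.residueOfEq h) := by
  subst h
  exact AddMonoidHom.ext fun x => (F.base_residue i x).symm

theorem eulerOfEq_comp_base (h : i + c = j) :
    (T.eulerOfEq h).comp (F.base i) = (F.base j).comp (S.eulerOfEq h) := by
  subst h
  exact AddMonoidHom.ext fun x => (F.base_euler i x).symm

theorem injective_total (h₁ : Surjective (F.base (s - c))) (h₂ : Injective (F.base s))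
    (h₃ : Injective (F.base (s - c + 1))) : Injective (F.total s) := by
  have hγ : s - c + c = s := by ring
  have hβ : s - c + 1 + (c - 1) = s := by ring
  exact AddMonoidHom.injective_of_surjective_of_injective_of_injective _ _ _ _ _ _ _ _ _ _
    (F.eulerOfEq_comp_base hγ) (F.pullback_comp_base s) (F.residueOfEq_comp_total hβ)
    (S.exact_eulerOfEq_pullback hγ) (S.exact_pullback_residueOfEq hβ)
    (T.exact_eulerOfEq_pullback hγ) h₁ h₂ h₃

theorem surjective_total (h₁ : Surjective (F.base s)) (h₂ : Surjective (F.base (s - c + 1)))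
    (h₃ : Injective (F.base (s + 1))) : Surjective (F.total s) := by
  have hβ : s - c + 1 + (c - 1) = s := by ring
  have hγ : s - c + 1 + c = s + 1 := by ring
  exact AddMonoidHom.surjective_of_surjective_of_surjective_of_injective _ _ _ _ _ _ _ _ _ _
    (F.pullback_comp_base s) (F.residueOfEq_comp_total hβ) (F.eulerOfEq_comp_base hγ)
    (S.exact_residueOfEq_eulerOfEq hβ hγ) (T.exact_pullback_residueOfEq hβ)
    (T.exact_residueOfEq_eulerOfEq hβ hγ) h₁ h₂ h₃

theorem injective_base (h₁ : Surjective (F.total (s - 1))) (h₂ : Injective (F.base (s - c)))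
    (h₃ : Injective (F.total s)) : Injective (F.base s) := by
  have hβ : s - c + (c - 1) = s - 1 := by ring
  have hγ : s - c + c = s := by ring
  exact AddMonoidHom.injective_of_surjective_of_injective_of_injective _ _ _ _ _ _ _ _ _ _
    (F.residueOfEq_comp_total hβ) (F.eulerOfEq_comp_base hγ) (F.pullback_comp_base s)
    (S.exact_residueOfEq_eulerOfEq hβ hγ) (S.exact_eulerOfEq_pullback hγ)
    (T.exact_residueOfEq_eulerOfEq hβ hγ) h₁ h₂ h₃

theorem surjective_base (h₁ : Surjective (F.base (s - c))) (h₂ : Surjective (F.total s))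
    (h₃ : Injective (F.base (s - c + 1))) : Surjective (F.base s) := by
  have hγ : s - c + c = s := by ring
  have hβ : s - c + 1 + (c - 1) = s := by ring
  exact AddMonoidHom.surjective_of_surjective_of_surjective_of_injective _ _ _ _ _ _ _ _ _ _
    (F.eulerOfEq_comp_base hγ) (F.pullback_comp_base s) (F.residueOfEq_comp_total hβ)
    (S.exact_pullback_residueOfEq hβ) (T.exact_eulerOfEq_pullback hγ)
    (T.exact_pullback_residueOfEq hβ) h₁ h₂ h₃

theorem isConnectedUpTo_total (hc : 1 ≤ c) (hF : IsConnectedUpTo F.base w) :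
    IsConnectedUpTo F.total w := by
  have injective_of_le (s : ℤ) (hs : s ≤ w) : Injective (F.total s) :=
    F.injective_total (hF.surjective (by lia)) (hF.injective hs) (hF.injective (by lia))
  have surjective_of_lt (s : ℤ) (hs : s < w) : Surjective (F.total s) :=
    F.surjective_total (hF.surjective hs) (hF.surjective (by lia)) (hF.injective hs)
  exact ⟨fun s hs => ⟨injective_of_le s hs.le, surjective_of_lt s hs⟩, injective_of_le w le_rfl⟩

theorem isConnectedUpTo_base_succ (hc : 1 ≤ c) (hbase : IsConnectedUpTo F.base v)
    (htotal : IsConnectedUpTo F.total (v + 1)) : IsConnectedUpTo F.base (v + 1) :=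
  hbase.succ
    (F.surjective_base (hbase.surjective (by lia)) (htotal.surjective (by lia))
      (hbase.injective (by lia)))
    (F.injective_base (htotal.surjective (by lia)) (hbase.injective (by lia)) htotal.2)

theorem isConnectedUpTo_base (hc : 1 ≤ c) (hv : IsConnectedUpTo F.base v)
    (htotal : IsConnectedUpTo F.total w) : IsConnectedUpTo F.base w := by
  rcases le_total w v with hwv | hvw
  · exact hv.mono hwv
  induction w, hvw using Int.leInduction with
  | base => exact hv
  | succ u _ ih =>
    exact F.isConnectedUpTo_base_succ hc (ih (htotal.mono (by lia))) htotal

end Hom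

end GysinSequence

theorem stmt2_general {c : ℤ} (hc : 1 ≤ c) {M M' N N' : ℤ → Type*}
    [∀ i, AddGroup (M i)] [∀ i, AddGroup (M' i)] [∀ i, AddGroup (N i)] [∀ i, AddGroup (N' i)]
    {S : GysinSequence c M M'} {T : GysinSequence c N N'} (F : S.Hom T)
    {v : ℤ} (hv : IsConnectedUpTo F.base v) (w : ℤ) :
    IsConnectedUpTo F.base w ↔ IsConnectedUpTo F.total w :=
  ⟨F.isConnectedUpTo_total hc, F.isConnectedUpTo_base hc hv⟩

/-- given two compatible long exact "Gysin-type" sequences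
`⋯ → M'^{s-1} → M^{s-2} → M^s → M'^s → M^{s-1} → M^{s+1} → ⋯` (and likewise for `N`),
with all groups vanishing in negative degrees, the family `(φ^i)` is `w`-connected iff
`(φ'^i)` is.  Here the maps are re-indexed so that `β s : M'^{s+1} →+ M s` corresponds to
`β^{s+1}` and `γ s : M^s →+ M^{s+2}` corresponds to `γ^{s+1}`. -/
theorem stmt2
    (M M' N N' : ℤ → Type*)
    [∀ i, AddCommGroup (M i)] [∀ i, AddCommGroup (M' i)]
    [∀ i, AddCommGroup (N i)] [∀ i, AddCommGroup (N' i)]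
    (hM : ∀ i < (0 : ℤ), Subsingleton (M i)) (hM' : ∀ i < (0 : ℤ), Subsingleton (M' i))
    (hN : ∀ i < (0 : ℤ), Subsingleton (N i)) (hN' : ∀ i < (0 : ℤ), Subsingleton (N' i))
    (φ : ∀ i, M i →+ N i) (φ' : ∀ i, M' i →+ N' i)
    (α : ∀ s, M s →+ M' s) (β : ∀ s, M' (s + 1) →+ M s) (γ : ∀ s, M s →+ M (s + 2))
    (α' : ∀ s, N s →+ N' s) (β' : ∀ s, N' (s + 1) →+ N s) (γ' : ∀ s, N s →+ N (s + 2))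
    (hex1 : ∀ s : ℤ, Function.Exact (γ s) (α (s + 2)))
    (hex2 : ∀ s : ℤ, Function.Exact (α (s + 1)) (β s))
    (hex3 : ∀ s : ℤ, Function.Exact (β s) (γ s))
    (hex1' : ∀ s : ℤ, Function.Exact (γ' s) (α' (s + 2)))
    (hex2' : ∀ s : ℤ, Function.Exact (α' (s + 1)) (β' s))
    (hex3' : ∀ s : ℤ, Function.Exact (β' s) (γ' s))
    (hcα : ∀ (s : ℤ) (x : M s), φ' s (α s x) = α' s (φ s x))
    (hcβ : ∀ (s : ℤ) (x : M' (s + 1)), φ s (β s x) = β' s (φ' (s + 1) x))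
    (hcγ : ∀ (s : ℤ) (x : M s), φ (s + 2) (γ s x) = γ' s (φ s x))
    (w : ℤ) :
    ((∀ i < w, Function.Bijective (φ i)) ∧ Function.Injective (φ w)) ↔
      ((∀ i < w, Function.Bijective (φ' i)) ∧ Function.Injective (φ' w)) :=
  stmt2_general (c := 2) one_le_two (S := ⟨α, β, γ, hex1, hex2, hex3⟩)
    (T := ⟨α', β', γ', hex1', hex2', hex3'⟩) ⟨φ, φ', hcα, hcβ, hcγ⟩
    (.of_subsingleton (w := -1) (fun i hi => hM i (by lia)) (fun i hi => hN i (by lia))) w
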